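/- arXiv:1502.02584 — 6 statements merged into one kernel-verified Lean document; each statement's English description precedes it below -/
import Mathlib

section
/- Let n ≥ 1, let 0 < λ ≤ Λ be real numbers, and let W₁, W₂ be Hermitian n×n complex matrices such that Wᵢ − λ·1 and Λ·1 − Wᵢ are positive semidefinite for i = 1, 2 (so in particular each Wᵢ is positive definite and has positive real determinant). Then there exists a Hermitian n×n complex matrix A such that A − Λ⁻¹·1 and λ⁻¹·1 − A are positive semidefinite and log(det W₁) − log(det W₂) = tr(A·(W₁ − W₂)), where det W₁, det W₂ are the (positive real) determinants and tr(A·(W₁ − W₂)) is a real number since A and W₁ − W₂ are Hermitian. -/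
open Matrix ComplexOrder

/-!
Restricted to the segment from `W₂` to `W₁`, the function `log det` has derivative
`tr (W⁻¹ (W₁ - W₂))` at `W` by Jacobi's formula, so the one-variable mean value theorem gives the
identity with `A = W⁻¹` for a single matrix `W` inside the segment; no average of inverses is
needed. Loewner intervals are convex, so `W` satisfies the same bounds as `W₁` and `W₂`, and
inversion reverses them.
-/

section Jacobi

-- Matrices carry no global norm; any choice gives the same derivatives.
open scoped Matrix.Norms.Elementwise

variable {ι R : Type*} [Fintype ι] [DecidableEq ι]

theorem sum_det_updateRow_eq_trace_adjugate_mul [CommRing R] (A B : Matrix ι ι R) :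
    ∑ i, (A.updateRow i (B i)).det = (A.adjugate * B).trace := by
  rw [trace_mul_comm]
  refine Finset.sum_congr rfl fun i _ ↦ ?_
  rw [← cramer_transpose_apply, cramer_eq_adjugate_mulVec, ← adjugate_transpose]
  simp only [mulVec, dotProduct, transpose_apply, diag_apply, mul_apply, mul_comm]

theorem hasDerivAt_det {𝕜 : Type*} [NontriviallyNormedField 𝕜] [NormedCommRing R]
    [NormedAlgebra 𝕜 R] {A : 𝕜 → Matrix ι ι R} {A' : Matrix ι ι R} {t : 𝕜}
    (hA : HasDerivAt A A' t) :
    HasDerivAt (fun s ↦ (A s).det) ((A t).adjugate * A').trace t := by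
  let detRows : ContinuousMultilinearMap 𝕜 (fun _ : ι ↦ ι → R) R :=
    { detRowAlternating.toMultilinearMap.restrictScalars 𝕜 with
      cont := Continuous.matrix_det continuous_id }
  exact ((detRows.hasFDerivAt (A t)).comp_hasDerivAt t hA).congr_deriv
    ((detRows.linearDeriv_apply (A t) A').trans
      (sum_det_updateRow_eq_trace_adjugate_mul (A t) A'))

theorem hasDerivAt_log_re_det {𝕜 : Type*} [RCLike 𝕜] {W : ℝ → Matrix ι ι 𝕜}
    {W' : Matrix ι ι 𝕜} {t : ℝ} (hW : HasDerivAt W W' t) (hpos : (W t).PosDef) :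
    HasDerivAt (fun s ↦ Real.log (RCLike.re (W s).det))
      (RCLike.re ((W t)⁻¹ * W').trace) t := by
  obtain ⟨hre, him⟩ := RCLike.pos_iff.1 hpos.det_pos
  have hdet : HasDerivAt (fun s ↦ RCLike.re (W s).det)
      (RCLike.re ((W t).adjugate * W').trace) t :=
    (RCLike.reCLM (K := 𝕜)).hasFDerivAt.comp_hasDerivAt t (hasDerivAt_det hW)
  have hadj : (W t).adjugate = (W t).det • (W t)⁻¹ := by
    rw [inv_def, Ring.inverse_eq_inv', smul_inv_smul₀ hpos.det_pos.ne']
  convert hdet.log hre.ne' using 1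
  rw [hadj, smul_mul, trace_smul, smul_eq_mul, RCLike.mul_re, him, zero_mul, sub_zero,
    mul_div_cancel_left₀ _ hre.ne']

end Jacobi

section MeanValue

open scoped Matrix.Norms.Elementwise

variable {ι 𝕜 : Type*} [RCLike 𝕜]

theorem convex_setOf_posDef : Convex ℝ {W : Matrix ι ι 𝕜 | W.PosDef} := by
  rw [convex_iff_forall_pos]
  exact fun A hA B hB a b ha hb _ ↦ (hA.smul ha).add (hB.smul hb)

variable [Fintype ι]

theorem ofReal_re_trace_mul_of_isHermitian {A B : Matrix ι ι 𝕜} (hA : A.IsHermitian)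
    (hB : B.IsHermitian) : ((RCLike.re (A * B).trace : ℝ) : 𝕜) = (A * B).trace := by
  rw [← RCLike.conj_eq_iff_re, starRingEnd_apply, ← trace_conjTranspose, conjTranspose_mul,
    hA.eq, hB.eq, trace_mul_comm]

theorem exists_mem_openSegment_log_det_sub_log_det_eq_trace [DecidableEq ι]
    {W₁ W₂ : Matrix ι ι 𝕜} (h₁ : W₁.PosDef) (h₂ : W₂.PosDef) :
    ∃ W ∈ openSegment ℝ W₂ W₁,
      ((Real.log (RCLike.re W₁.det) - Real.log (RCLike.re W₂.det) : ℝ) : 𝕜) =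
        (W⁻¹ * (W₁ - W₂)).trace := by
  let W : ℝ → Matrix ι ι 𝕜 := AffineMap.lineMap W₂ W₁
  have hpos (t : ℝ) (ht : t ∈ Set.Icc 0 1) : (W t).PosDef :=
    convex_setOf_posDef.lineMap_mem (Set.mem_ofPred.2 h₂) (Set.mem_ofPred.2 h₁) ht
  have hderiv (t : ℝ) (ht : t ∈ Set.Icc 0 1) :
      HasDerivAt (fun s ↦ Real.log (RCLike.re (W s).det))
        (RCLike.re ((W t)⁻¹ * (W₁ - W₂)).trace) t :=
    hasDerivAt_log_re_det AffineMap.hasDerivAt_lineMap (hpos t ht)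
  obtain ⟨c, hc, hslope⟩ := exists_hasDerivAt_eq_slope _ _ zero_lt_one
    (fun t ht ↦ (hderiv t ht).continuousAt.continuousWithinAt)
    (fun t ht ↦ hderiv t (Set.Ioo_subset_Icc_self ht))
  have hWc : (W c).PosDef := hpos c (Set.Ioo_subset_Icc_self hc)
  refine ⟨W c, openSegment_eq_image_lineMap ℝ W₂ W₁ ▸ ⟨c, hc, rfl⟩, ?_⟩
  rw [← ofReal_re_trace_mul_of_isHermitian hWc.inv.isHermitian
    (h₁.isHermitian.sub h₂.isHermitian), hslope]
  simp [W]

end MeanValue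

section LoewnerOrder

open scoped MatrixOrder

variable {ι 𝕜 : Type*} [RCLike 𝕜]

theorem posDef_of_posDef_of_le {A B : Matrix ι ι 𝕜} (hA : A.PosDef) (hAB : A ≤ B) :
    B.PosDef :=
  add_sub_cancel A B ▸ hA.add_posSemidef (le_iff.1 hAB)

variable [Fintype ι] [DecidableEq ι]

theorem inv_le_inv_of_posDef_of_le {A B : Matrix ι ι 𝕜} (hA : A.PosDef) (hAB : A ≤ B) :
    B⁻¹ ≤ A⁻¹ := by
  have hB : B.PosDef := posDef_of_posDef_of_le hA hAB
  have := hB.isUnit.invertible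
  have := hA.inv.isUnit.invertible
  -- The two Schur complements of this block matrix are `B - A` and `A⁻¹ - B⁻¹`.
  have hblock : (fromBlocks B 1 1ᴴ A⁻¹).PosSemidef := by
    rw [PosDef.fromBlocks₂₂ _ _ hA.inv]
    simpa [nonsing_inv_nonsing_inv _ hA.det_pos.ne'.isUnit] using le_iff.1 hAB
  rw [PosDef.fromBlocks₁₁ _ _ hB] at hblock
  simpa [le_iff] using hblock

theorem logDet_mean_value_general {P Q W₁ W₂ : Matrix ι ι 𝕜} (hP : P.PosDef)
    (h₁ : W₁ ∈ Set.Icc P Q) (h₂ : W₂ ∈ Set.Icc P Q) :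
    ∃ A : Matrix ι ι 𝕜, A.IsHermitian ∧ Q⁻¹ ≤ A ∧ A ≤ P⁻¹ ∧
      ((Real.log (RCLike.re W₁.det) - Real.log (RCLike.re W₂.det) : ℝ) : 𝕜) =
        (A * (W₁ - W₂)).trace := by
  obtain ⟨W, hW, hlog⟩ := exists_mem_openSegment_log_det_sub_log_det_eq_trace
    (posDef_of_posDef_of_le hP h₁.1) (posDef_of_posDef_of_le hP h₂.1)
  obtain ⟨hPW, hWQ⟩ := (convex_Icc P Q).openSegment_subset h₂ h₁ hW
  have hWpos : W.PosDef := posDef_of_posDef_of_le hP hPW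
  exact ⟨W⁻¹, hWpos.inv.isHermitian, inv_le_inv_of_posDef_of_le hWpos hWQ,
    inv_le_inv_of_posDef_of_le hP hPW, hlog⟩

end LoewnerOrder

theorem inv_smul_one {ι K : Type*} [Fintype ι] [DecidableEq ι] [Field K] (c : K) :
    (c • (1 : Matrix ι ι K))⁻¹ = c⁻¹ • 1 := by
  obtain rfl | hc := eq_or_ne c 0
  · simp
  · exact inv_eq_right_inv (by simp [smul_smul, hc])

/-- Mean-value identity for the log-determinant between two uniformly pinched
Hermitian matrices: there is a Hermitian matrix `A` pinched between `Λ⁻¹ • 1` and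
`λ⁻¹ • 1` with `log det W₁ − log det W₂ = tr (A (W₁ − W₂))`. -/
theorem logDet_mean_value (n : ℕ) (hn : 1 ≤ n) (lam Lam : ℝ)
    (hlam : 0 < lam) (hlamLam : lam ≤ Lam)
    (W₁ W₂ : Matrix (Fin n) (Fin n) ℂ)
    (hW₁ : W₁.IsHermitian) (hW₂ : W₂.IsHermitian)
    (h₁l : (W₁ - (lam : ℂ) • 1).PosSemidef) (h₁L : ((Lam : ℂ) • 1 - W₁).PosSemidef)
    (h₂l : (W₂ - (lam : ℂ) • 1).PosSemidef) (h₂L : ((Lam : ℂ) • 1 - W₂).PosSemidef) :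
    ∃ A : Matrix (Fin n) (Fin n) ℂ, A.IsHermitian ∧
      (A - ((Lam⁻¹ : ℝ) : ℂ) • 1).PosSemidef ∧
      (((lam⁻¹ : ℝ) : ℂ) • 1 - A).PosSemidef ∧
      ((Real.log W₁.det.re - Real.log W₂.det.re : ℝ) : ℂ) = (A * (W₁ - W₂)).trace := by
  have hP : ((lam : ℂ) • (1 : Matrix (Fin n) (Fin n) ℂ)).PosDef :=
    PosDef.one.smul (by exact_mod_cast hlam)
  simpa only [inv_smul_one, ← Complex.ofReal_inv] using!
    logDet_mean_value_general hP ⟨h₁l, h₁L⟩ ⟨h₂l, h₂L⟩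
end

section
/- Let d ≥ 1 and let f : ℝᵈ × ℝ → ℝ be a nonnegative function that is bounded above by a constant B on the parabolic cylinder Q((0,0), 2). Suppose (x₀, t₀) ∈ Q((0,0), 1) and λ₀ := f(x₀, t₀) ≥ 4. Then there exists a point (x̃, t̃) ∈ Q((0,0), 3/2) such that f(x̃, t̃) ≥ λ₀ and f(y, s) ≤ 2·f(x̃, t̃) for every (y, s) ∈ Q((x̃, t̃), 1/f(x̃, t̃)). -/
/-- The parabolic cylinder `Q((x,t), r)` in `ℝᵈ × ℝ`. -/
def parabolicCylinder (d : ℕ) (p : EuclideanSpace ℝ (Fin d) × ℝ) (r : ℝ) :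
    Set (EuclideanSpace ℝ (Fin d) × ℝ) :=
  {q | ‖q.1 - p.1‖ < r ∧ p.2 - r ^ 2 < q.2 ∧ q.2 ≤ p.2}

/-!
Parabolic cylinders obey a triangle inequality, since `r ^ 2 + s ^ 2 ≤ (r + s) ^ 2`. Take `p` to
maximize `f`, up to a factor `K`, among the points with `Q(p, c / f p) ⊆ Q(p₀, c / f p₀)` and
`f p₀ ≤ f p`. If some `q ∈ Q(p, 1 / f p)` had `f q > K * f p`, then `q` would be a competitor,
because `1 / f p + c / f q ≤ (1 + c / K) / f p = c / f p` for `c = K / (K - 1)`, contradicting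
the choice of `p`.
-/

/-- The axioms shared by the balls `Q p r = {q | ρ p q < r}` of all, possibly asymmetric, distances
`ρ`: what point picking needs to know about parabolic cylinders, which reach only into the past.
Radii are real, as in `parabolicCylinder`, and only positive ones are constrained. -/
structure IsQuasiMetricBallFamily {α : Type*} (Q : α → ℝ → Set α) : Prop where
  mem_self : ∀ p {r}, 0 < r → p ∈ Q p r
  subset_add : ∀ {p q r s}, 0 < r → 0 < s → q ∈ Q p r → Q q s ⊆ Q p (r + s)

namespace IsQuasiMetricBallFamily

variable {α : Type*} {Q : α → ℝ → Set α}

theorem mono (hQ : IsQuasiMetricBallFamily Q) (p : α) {r s : ℝ} (hr : 0 < r) (hrs : r ≤ s) :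
    Q p r ⊆ Q p s := by
  obtain rfl | hlt := hrs.eq_or_lt
  · rfl
  · have hdiff : 0 < s - r := sub_pos.mpr hlt
    simpa using hQ.subset_add hdiff hr (hQ.mem_self p hdiff)

theorem subset_of_add_le (hQ : IsQuasiMetricBallFamily Q) {p q : α} {r s R : ℝ} (hr : 0 < r)
    (hs : 0 < s) (hR : r + s ≤ R) (hq : q ∈ Q p r) : Q q s ⊆ Q p R :=
  (hQ.subset_add hr hs hq).trans (hQ.mono p (add_pos hr hs) hR)

end IsQuasiMetricBallFamily

theorem one_div_add_div_sub_one_div_le {K a b : ℝ} (hK : 1 < K) (ha : 0 < a) (hab : K * a ≤ b) :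
    1 / a + K / (K - 1) / b ≤ K / (K - 1) / a := by
  have hK₁ : 0 < K - 1 := sub_pos.mpr hK
  have : 0 < K := one_pos.trans hK
  calc
    1 / a + K / (K - 1) / b ≤ 1 / a + K / (K - 1) / (K * a) := by gcongr
    _ = K / (K - 1) / a := by field_simp; ring

theorem exists_forall_lt_mul_of_bddAbove {A : Set ℝ} (hA : BddAbove A) {a K : ℝ} (haA : a ∈ A)
    (ha : 0 < a) (hK : 1 < K) : ∃ b ∈ A, ∀ x ∈ A, x < K * b := by
  have hsup : 0 < sSup A := ha.trans_le (le_csSup hA haA)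
  obtain ⟨b, hbA, hb⟩ := exists_lt_of_lt_csSup ⟨a, haA⟩ (div_lt_self hsup hK)
  exact ⟨b, hbA, fun x hx ↦
    (le_csSup hA hx).trans_lt ((div_lt_iff₀' (one_pos.trans hK)).mp hb)⟩

theorem parabolic_point_picking_general {α : Type*} {Q : α → ℝ → Set α}
    (hQ : IsQuasiMetricBallFamily Q) {f : α → ℝ} {K : ℝ} (hK : 1 < K) {p₀ : α} (hp₀ : 0 < f p₀)
    (hf : BddAbove (f '' Q p₀ (K / (K - 1) / f p₀))) :
    ∃ p ∈ Q p₀ (K / (K - 1) / f p₀), f p₀ ≤ f p ∧ ∀ q ∈ Q p (1 / f p), f q ≤ K * f p := by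
  set c := K / (K - 1)
  have hc₀ : 0 < c := div_pos (one_pos.trans hK) (sub_pos.mpr hK)
  let S : Set α := {p | f p₀ ≤ f p ∧ Q p (c / f p) ⊆ Q p₀ (c / f p₀)}
  have hS_subset : S ⊆ Q p₀ (c / f p₀) := fun p hp ↦
    hp.2 (hQ.mem_self p (div_pos hc₀ (hp₀.trans_le hp.1)))
  have hp₀S : p₀ ∈ S := ⟨le_rfl, subset_rfl⟩
  obtain ⟨_, ⟨p, hpS, rfl⟩, hp_max⟩ := exists_forall_lt_mul_of_bddAbove
    (hf.mono (Set.image_mono hS_subset)) (Set.mem_image_of_mem f hp₀S) hp₀ hK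
  refine ⟨p, hS_subset hpS, hpS.1, fun q hq ↦ ?_⟩
  by_contra! hlt
  have hp : 0 < f p := hp₀.trans_le hpS.1
  have hpq : f p < f q := (lt_mul_of_one_lt_left hp hK).trans hlt
  have hq_subset : Q q (c / f q) ⊆ Q p (c / f p) :=
    hQ.subset_of_add_le (one_div_pos.mpr hp) (div_pos hc₀ (hp.trans hpq))
      (one_div_add_div_sub_one_div_le hK hp hlt.le) hq
  have hqS : q ∈ S := ⟨hpS.1.trans hpq.le, hq_subset.trans hpS.2⟩
  exact (hp_max (f q) (Set.mem_image_of_mem f hqS)).not_gt hlt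

theorem parabolicCylinder_isQuasiMetricBallFamily (d : ℕ) :
    IsQuasiMetricBallFamily (parabolicCylinder d) where
  mem_self p r hr := ⟨by simpa using hr, by simpa using pow_pos hr 2, le_rfl⟩
  subset_add := by
    rintro p q r s hr hs ⟨hq_space, hq_time, hq_le⟩ z ⟨hz_space, hz_time, hz_le⟩
    refine ⟨?_, ?_, hz_le.trans hq_le⟩
    · calc
        ‖z.1 - p.1‖ ≤ ‖z.1 - q.1‖ + ‖q.1 - p.1‖ := norm_sub_le_norm_sub_add_norm_sub ..
        _ < r + s := by linarith
    · have hsq : r ^ 2 + s ^ 2 ≤ (r + s) ^ 2 := by nlinarith [mul_pos hr hs]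
      linarith

/-- Parabolic point-picking: if a nonnegative function `f` is bounded on `Q((0,0),2)`
and takes a value `≥ 4` at some point of `Q((0,0),1)`, then there is a point of
`Q((0,0),3/2)` at which `f` is at least as large, and around which `f` is controlled
on the cylinder of radius `1/f` by twice its value there. -/
theorem parabolic_point_picking (d : ℕ) (hd : 1 ≤ d)
    (f : EuclideanSpace ℝ (Fin d) × ℝ → ℝ) (hf0 : ∀ q, 0 ≤ f q)
    (B : ℝ) (hfB : ∀ q ∈ parabolicCylinder d (0, 0) 2, f q ≤ B)
    (p₀ : EuclideanSpace ℝ (Fin d) × ℝ) (hp₀ : p₀ ∈ parabolicCylinder d (0, 0) 1)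
    (hlam0 : 4 ≤ f p₀) :
    ∃ p ∈ parabolicCylinder d (0, 0) (3 / 2), f p₀ ≤ f p ∧
      ∀ q ∈ parabolicCylinder d p (1 / f p), f q ≤ 2 * f p := by
  have hQ := parabolicCylinder_isQuasiMetricBallFamily d
  have hpos : 0 < f p₀ := by linarith
  have hradius : 2 / (2 - 1) / f p₀ ≤ 1 / 2 := (div_le_iff₀ hpos).mpr (by linarith)
  have hsubset : parabolicCylinder d p₀ (2 / (2 - 1) / f p₀) ⊆ parabolicCylinder d (0, 0) (3 / 2) :=
    hQ.subset_of_add_le one_pos (div_pos (by norm_num) hpos) (by linarith) hp₀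
  obtain ⟨p, hp, hfp⟩ := parabolic_point_picking_general hQ one_lt_two hpos
    ⟨B, Set.forall_mem_image.mpr fun q hq ↦
      hfB q (hQ.mono (0, 0) (by norm_num) (by norm_num) (hsubset hq))⟩
  exact ⟨p, hsubset hp, hfp⟩
end

section
/- Let n ≥ 1 and let G, H be positive-definite Hermitian n×n complex matrices. Then tr(H⁻¹G), tr(G⁻¹H), det G and det H are positive real numbers, and tr(H⁻¹G) ≤ (tr(G⁻¹H))^(n−1) · (det G / det H). -/
open Matrix ComplexOrder

/-!
With `K = G⁻¹ * H` one has `H⁻¹ * G = K⁻¹ = (det G / det H) • adj K`, so the inequality says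
`tr (adj K) ≤ (tr K) ^ (n - 1)`. Both sides are unchanged under `A * B ↦ B * A`; writing
`H = Cᴴ * C` therefore replaces `K` by the positive semidefinite matrix `C * G⁻¹ * Cᴴ`. In terms of
its eigenvalues `x i ≥ 0` the claim becomes `∑ i, ∏ j ≠ i, x j ≤ (∑ i, x i) ^ (n - 1)`, where the
left-hand side consists of some of the monomials in the expansion of the right-hand side.
-/

section SumProdErase

variable {ι R : Type*} [CommSemiring R]

lemma prod_le_sum_pow_card [PartialOrder R] [IsOrderedRing R] {s : Finset ι} {x : ι → R}
    (hx : ∀ i ∈ s, 0 ≤ x i) : ∏ i ∈ s, x i ≤ (∑ i ∈ s, x i) ^ s.card :=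
  calc ∏ i ∈ s, x i ≤ ∏ _i ∈ s, ∑ j ∈ s, x j :=
        Finset.prod_le_prod hx fun _ hi ↦ Finset.single_le_sum hx hi
    _ = (∑ i ∈ s, x i) ^ s.card := Finset.prod_const _

variable [DecidableEq ι]

lemma sum_prod_erase_insert {a : ι} {s : Finset ι} (ha : a ∉ s) (x : ι → R) :
    ∑ i ∈ insert a s, ∏ j ∈ (insert a s).erase i, x j =
      ∏ j ∈ s, x j + x a * ∑ i ∈ s, ∏ j ∈ s.erase i, x j := by
  rw [Finset.sum_insert ha, Finset.erase_insert ha, Finset.mul_sum]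
  congr 1
  refine Finset.sum_congr rfl fun i hi ↦ ?_
  rw [Finset.erase_insert_of_ne (ne_of_mem_of_not_mem hi ha).symm,
    Finset.prod_insert fun h ↦ ha (Finset.mem_of_mem_erase h)]

lemma sum_prod_erase_le_sum_pow [PartialOrder R] [IsOrderedRing R] {s : Finset ι} {x : ι → R}
    (hx : ∀ i ∈ s, 0 ≤ x i) :
    ∑ i ∈ s, ∏ j ∈ s.erase i, x j ≤ (∑ i ∈ s, x i) ^ (s.card - 1) := by
  induction s using Finset.induction_on with
  | empty => simp
  | insert a s ha ih =>
    have ha_nonneg : 0 ≤ x a := hx a (Finset.mem_insert_self a s)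
    have hs_nonneg : ∀ i ∈ s, 0 ≤ x i := fun i hi ↦ hx i (Finset.mem_insert_of_mem hi)
    rw [sum_prod_erase_insert ha, Finset.sum_insert ha, Finset.card_insert_of_notMem ha,
      Nat.add_sub_cancel]
    rcases s.eq_empty_or_nonempty with rfl | hs
    · simp
    set S := ∑ i ∈ s, x i
    have hS : 0 ≤ S := Finset.sum_nonneg hs_nonneg
    calc ∏ j ∈ s, x j + x a * ∑ i ∈ s, ∏ j ∈ s.erase i, x j
        ≤ S ^ s.card + x a * S ^ (s.card - 1) := by
          gcongr
          · exact prod_le_sum_pow_card hs_nonneg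
          · exact ih hs_nonneg
      _ = (x a + S) * S ^ (s.card - 1) := by
          rw [← mul_pow_sub_one hs.card_ne_zero S, add_mul, add_comm]
      _ ≤ (x a + S) * (x a + S) ^ (s.card - 1) := by
          gcongr
          exact le_add_of_nonneg_left ha_nonneg
      _ = (x a + S) ^ s.card := mul_pow_sub_one hs.card_ne_zero _

end SumProdErase

section Trace

variable {𝕜 ι : Type*} [RCLike 𝕜] [Fintype ι]

open scoped MatrixOrder in
lemma trace_mul_pos_of_posDef [Nonempty ι] {A B : Matrix ι ι 𝕜} (hA : A.PosDef) (hB : B.PosDef) :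
    0 < (A * B).trace := by
  classical
  obtain ⟨C, rfl⟩ := CStarAlgebra.nonneg_iff_eq_star_mul_self.1 hB.posSemidef.nonneg
  have hC : IsUnit C := isUnit_of_mul_isUnit_right hB.isUnit
  rw [← mul_assoc, trace_mul_comm, ← mul_assoc]
  exact (hA.mul_mul_conjTranspose_same (vecMul_injective_iff_isUnit.2 hC)).trace_pos

variable [DecidableEq ι]

lemma trace_adjugate_mul_comm {R : Type*} [CommRing R] (A B : Matrix ι ι R) :
    (A * B).adjugate.trace = (B * A).adjugate.trace := by
  rw [adjugate_mul_distrib, adjugate_mul_distrib, trace_mul_comm]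

lemma trace_adjugate_eq_sum_prod_erase_eigenvalues {A : Matrix ι ι 𝕜} (hA : A.IsHermitian) :
    A.adjugate.trace = ∑ i, ∏ j ∈ Finset.univ.erase i, (hA.eigenvalues j : 𝕜) := by
  conv_lhs => rw [hA.spectral_theorem, Unitary.conjStarAlgAut_apply, trace_adjugate_mul_comm,
    ← mul_assoc, Unitary.coe_star_mul_self, one_mul, adjugate_diagonal, trace_diagonal]
  rfl

lemma trace_adjugate_le_trace_pow_of_posSemidef {A : Matrix ι ι 𝕜} (hA : A.PosSemidef) :
    A.adjugate.trace ≤ A.trace ^ (Fintype.card ι - 1) := by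
  rw [trace_adjugate_eq_sum_prod_erase_eigenvalues hA.isHermitian,
    hA.isHermitian.trace_eq_sum_eigenvalues]
  exact sum_prod_erase_le_sum_pow fun i _ ↦ RCLike.ofReal_nonneg.2 (hA.eigenvalues_nonneg i)

open scoped MatrixOrder in
lemma trace_adjugate_mul_le_trace_mul_pow_of_posSemidef {A B : Matrix ι ι 𝕜} (hA : A.PosSemidef)
    (hB : B.PosSemidef) : (A * B).adjugate.trace ≤ (A * B).trace ^ (Fintype.card ι - 1) := by
  obtain ⟨C, rfl⟩ := CStarAlgebra.nonneg_iff_eq_star_mul_self.1 hB.nonneg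
  rw [← mul_assoc, trace_adjugate_mul_comm, trace_mul_comm, ← mul_assoc]
  exact trace_adjugate_le_trace_pow_of_posSemidef (hA.mul_mul_conjTranspose_same C)

lemma inv_mul_eq_smul_adjugate {K : Type*} [Field K] {G : Matrix ι ι K} (hG : IsUnit G.det)
    (H : Matrix ι ι K) : H⁻¹ * G = (G.det / H.det) • (G⁻¹ * H).adjugate := by
  have hdet : (G⁻¹ * H).det⁻¹ = G.det / H.det := by
    rw [det_mul, det_nonsing_inv, Ring.inverse_eq_inv', mul_inv, inv_inv, div_eq_mul_inv]
  rw [← hdet, ← Ring.inverse_eq_inv', ← inv_def, Matrix.mul_inv_rev, nonsing_inv_nonsing_inv _ hG]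

lemma trace_inv_mul_le_trace_pow_mul_det_div {G H : Matrix ι ι 𝕜} (hG : G.PosDef)
    (hH : H.PosDef) :
    (H⁻¹ * G).trace ≤ (G⁻¹ * H).trace ^ (Fintype.card ι - 1) * (G.det / H.det) := by
  rw [inv_mul_eq_smul_adjugate hG.det_pos.ne'.isUnit, trace_smul, smul_eq_mul, mul_comm]
  gcongr
  · exact (div_pos hG.det_pos hH.det_pos).le
  · exact trace_adjugate_mul_le_trace_mul_pow_of_posSemidef hG.inv.posSemidef hH.posSemidef

theorem trace_agm_inequality_general [Nonempty ι] {G H : Matrix ι ι 𝕜} (hG : G.PosDef)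
    (hH : H.PosDef) :
    0 < RCLike.re (H⁻¹ * G).trace ∧ RCLike.im (H⁻¹ * G).trace = 0 ∧
    0 < RCLike.re (G⁻¹ * H).trace ∧ RCLike.im (G⁻¹ * H).trace = 0 ∧
    0 < RCLike.re G.det ∧ RCLike.im G.det = 0 ∧
    0 < RCLike.re H.det ∧ RCLike.im H.det = 0 ∧
    RCLike.re (H⁻¹ * G).trace ≤
      RCLike.re (G⁻¹ * H).trace ^ (Fintype.card ι - 1) * (RCLike.re G.det / RCLike.re H.det) := by
  have hle := trace_inv_mul_le_trace_pow_mul_det_div hG hH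
  obtain ⟨a, ha, ha_eq⟩ := RCLike.pos_iff_exists_ofReal.1 (trace_mul_pos_of_posDef hH.inv hG)
  obtain ⟨b, hb, hb_eq⟩ := RCLike.pos_iff_exists_ofReal.1 (trace_mul_pos_of_posDef hG.inv hH)
  obtain ⟨g, hg, hg_eq⟩ := RCLike.pos_iff_exists_ofReal.1 hG.det_pos
  obtain ⟨h, hh, hh_eq⟩ := RCLike.pos_iff_exists_ofReal.1 hH.det_pos
  rw [← ha_eq, ← hb_eq, ← hg_eq, ← hh_eq] at hle ⊢
  simp only [RCLike.ofReal_re, RCLike.ofReal_im, true_and]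
  exact ⟨ha, hb, hg, hh, mod_cast hle⟩

end Trace

/-- For positive-definite Hermitian matrices `G`, `H`, the traces `tr(H⁻¹G)`,
`tr(G⁻¹H)` and the determinants are positive reals, and the arithmetic–geometric
mean inequality `tr(H⁻¹G) ≤ (tr(G⁻¹H))^(n−1) · det G / det H` holds. -/
theorem trace_agm_inequality (n : ℕ) (hn : 1 ≤ n)
    (G H : Matrix (Fin n) (Fin n) ℂ) (hG : G.PosDef) (hH : H.PosDef) :
    0 < (H⁻¹ * G).trace.re ∧ (H⁻¹ * G).trace.im = 0 ∧
    0 < (G⁻¹ * H).trace.re ∧ (G⁻¹ * H).trace.im = 0 ∧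
    0 < G.det.re ∧ G.det.im = 0 ∧
    0 < H.det.re ∧ H.det.im = 0 ∧
    (H⁻¹ * G).trace.re ≤ (G⁻¹ * H).trace.re ^ (n - 1) * (G.det.re / H.det.re) := by
  have : Nonempty (Fin n) := Fin.pos_iff_nonempty.1 hn
  simpa using trace_agm_inequality_general hG hH
end

section
/- Let μ be a probability measure on a measurable space X, let v : X → ℝ be a nonnegative integrable function with mean v̄ := ∫ v dμ, and suppose there are constants δ > 0 and C₁ ≥ 0 with μ{x : v(x) ≤ C₁} ≥ δ. Then ∫ v dμ ≤ δ⁻¹·( ∫ |v − v̄| dμ + C₁ ). -/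
open MeasureTheory

section Sublevel

variable {X : Type*} [MeasurableSpace X] {μ : Measure X} {v : X → ℝ} {a c δ : ℝ}

theorem sub_mul_measureReal_sublevel_le_integral_abs_sub
    (hv : Integrable (fun x ↦ v x - c) μ) (hac : a < c) :
    (c - a) * μ.real {x | v x ≤ a} ≤ ∫ x, |v x - c| ∂μ := by
  have sublevel_subset : {x | v x ≤ a} ⊆ {x | c - a ≤ |v x - c|} := fun x hx ↦
    calc c - a ≤ c - v x := sub_le_sub_left hx c
      _ ≤ |c - v x| := le_abs_self _
      _ = |v x - c| := abs_sub_comm _ _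
  have deviation_finite : μ {x | c - a ≤ |v x - c|} ≠ ⊤ :=
    (hv.measure_norm_ge_lt_top (sub_pos.2 hac)).ne
  calc (c - a) * μ.real {x | v x ≤ a}
      ≤ (c - a) * μ.real {x | c - a ≤ |v x - c|} :=
        mul_le_mul_of_nonneg_left (measureReal_mono sublevel_subset deviation_finite)
          (sub_pos.2 hac).le
    _ ≤ ∫ x, |v x - c| ∂μ :=
        mul_meas_ge_le_integral_of_nonneg (.of_forall fun _ ↦ abs_nonneg _) hv.abs (c - a)

theorem mul_sub_le_integral_abs_sub_of_le_measureReal_sublevel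
    (hv : Integrable (fun x ↦ v x - c) μ) (hδ : 0 ≤ δ) (hδa : δ ≤ μ.real {x | v x ≤ a}) :
    δ * (c - a) ≤ ∫ x, |v x - c| ∂μ := by
  rcases le_or_gt c a with hca | hac
  · exact (mul_nonpos_of_nonneg_of_nonpos hδ (sub_nonpos.2 hca)).trans
      (integral_nonneg fun _ ↦ abs_nonneg _)
  · calc δ * (c - a) ≤ μ.real {x | v x ≤ a} * (c - a) :=
          mul_le_mul_of_nonneg_right hδa (sub_pos.2 hac).le
      _ = (c - a) * μ.real {x | v x ≤ a} := mul_comm _ _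
      _ ≤ ∫ x, |v x - c| ∂μ := sub_mul_measureReal_sublevel_le_integral_abs_sub hv hac

end Sublevel

theorem mean_le_osc_of_sublevel_general {X : Type*} [MeasurableSpace X]
    (μ : Measure X) [IsProbabilityMeasure μ]
    (v : X → ℝ) (hv : Integrable v μ)
    (δ C₁ : ℝ) (hδ : 0 < δ) (hC₁ : 0 ≤ C₁)
    (hmeas : ENNReal.ofReal δ ≤ μ {x | v x ≤ C₁}) :
    ∫ x, v x ∂μ ≤ δ⁻¹ * ((∫ x, |v x - ∫ y, v y ∂μ| ∂μ) + C₁) := by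
  set m := ∫ x, v x ∂μ
  have le_sublevel : δ ≤ μ.real {x | v x ≤ C₁} :=
    (ENNReal.ofReal_le_iff_le_toReal (measure_ne_top μ _)).1 hmeas
  have le_one : δ ≤ 1 := le_sublevel.trans measureReal_le_one
  rw [le_inv_mul_iff₀ hδ]
  calc δ * m = δ * (m - C₁) + δ * C₁ := by ring
    _ ≤ (∫ x, |v x - m| ∂μ) + C₁ :=
      add_le_add
        (mul_sub_le_integral_abs_sub_of_le_measureReal_sublevel
          (hv.sub (integrable_const m)) hδ.le le_sublevel)
        (mul_le_of_le_one_left hC₁ le_one)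

/-- If a nonnegative integrable function `v` has a sublevel set `{v ≤ C₁}` of
measure at least `δ > 0` with respect to a probability measure `μ`, then its mean
is controlled by its `L¹` oscillation about the mean:
`∫ v ≤ δ⁻¹ (∫ |v − v̄| + C₁)`. -/
theorem mean_le_osc_of_sublevel {X : Type*} [MeasurableSpace X]
    (μ : Measure X) [IsProbabilityMeasure μ]
    (v : X → ℝ) (hv : Integrable v μ) (hv0 : ∀ x, 0 ≤ v x)
    (δ C₁ : ℝ) (hδ : 0 < δ) (hC₁ : 0 ≤ C₁)
    (hmeas : ENNReal.ofReal δ ≤ μ {x | v x ≤ C₁}) :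
    ∫ x, v x ∂μ ≤ δ⁻¹ * ((∫ x, |v x - ∫ y, v y ∂μ| ∂μ) + C₁) :=
  mean_le_osc_of_sublevel_general μ v hv δ C₁ hδ hC₁ hmeas
end

section
/- Fix real constants λ > 1, p₀ ≥ 1 and C ≥ 1. There exists a constant C₀ ≥ 1, depending only on λ, p₀ and C, with the following property: for every probability measure μ on a measurable space X and every measurable function f : X → [0,∞) such that (∫ f^(λp) dμ)^(1/(λp)) ≤ (C·p)^(1/p) · (∫ f^p dμ)^(1/p) for every real p ≥ p₀, one has essSup_μ f ≤ C₀ · (∫ f^(p₀) dμ)^(1/p₀). -/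
open MeasureTheory

/-!
Iterating the reverse Hölder inequality along the exponents `λⁿ p₀` bounds `‖f‖_{λⁿ p₀}` by
`∏_{i < n} (C λⁱ p₀)^{1/(λⁱ p₀)} ‖f‖_{p₀}`. The product converges because the logarithm of its
`i`-th factor is an affine function of `i` times `λ⁻ⁱ`. On the other side, Markov's inequality
`t μ{|f| ≥ t}^{1/q} ≤ ‖f‖_q` gives `t ≤ liminf ‖f‖_q` as `q → ∞` for every `t < essSup |f|`.
-/

open Filter Topology
open scoped ENNReal

section EssSup

theorem continuous_const_ennrpow {c : ℝ≥0∞} (hc₀ : c ≠ 0) (hc : c ≠ ∞) :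
    Continuous fun r : ℝ => c ^ r := by
  lift c to NNReal using hc
  rw [ENNReal.coe_ne_zero] at hc₀
  simp_rw [← ENNReal.coe_rpow_of_ne_zero hc₀]
  exact ENNReal.continuous_coe.comp <| continuous_iff_continuousAt.mpr fun _ =>
    tendsto_const_nhds.nnrpow tendsto_id (Or.inl hc₀)

variable {X ε : Type*} [MeasurableSpace X] {μ : Measure X} {f : X → ε}

theorem measure_le_enorm_ne_zero_of_lt_eLpNormEssSup [ENorm ε] {t : ℝ≥0∞}
    (ht : t < eLpNormEssSup f μ) : μ {x | t ≤ ‖f x‖ₑ} ≠ 0 :=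
  frequently_ae_iff.mp <|
    (frequently_lt_of_lt_limsup (by isBoundedDefault) ht).mono fun _ => le_of_lt

variable [TopologicalSpace ε] [ContinuousENorm ε]

theorem mul_measure_le_enorm_rpow_le_eLpNorm' (hf : AEStronglyMeasurable f μ) {q : ℝ} (hq : 0 < q)
    (t : ℝ≥0∞) : t * μ {x | t ≤ ‖f x‖ₑ} ^ (1 / q) ≤ eLpNorm' f q μ := by
  have hq_inv : 0 ≤ 1 / q := (one_div_pos.mpr hq).le
  have markov : t ^ q * μ {x | t ≤ ‖f x‖ₑ} ≤ ∫⁻ x, ‖f x‖ₑ ^ q ∂μ := by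
    simpa only [ENNReal.rpow_le_rpow_iff hq] using
      mul_meas_ge_le_lintegral₀ (hf.enorm.pow_const q) (t ^ q)
  calc t * μ {x | t ≤ ‖f x‖ₑ} ^ (1 / q)
      = (t ^ q * μ {x | t ≤ ‖f x‖ₑ}) ^ (1 / q) := by
        rw [ENNReal.mul_rpow_of_nonneg _ _ hq_inv, ← ENNReal.rpow_mul,
          mul_one_div_cancel hq.ne', ENNReal.rpow_one]
    _ ≤ eLpNorm' f q μ := ENNReal.rpow_le_rpow markov hq_inv

theorem eLpNormEssSup_le_liminf_eLpNorm' (hf : AEStronglyMeasurable f μ) :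
    eLpNormEssSup f μ ≤ liminf (fun q : ℝ => eLpNorm' f q μ) atTop := by
  refine le_of_forall_lt_imp_le_of_dense fun t ht => ?_
  -- Truncating at `1` keeps the argument valid when the superlevel set has infinite measure.
  set c : ℝ≥0∞ := min (μ {x | t ≤ ‖f x‖ₑ}) 1
  have hc₀ : c ≠ 0 :=
    (lt_min (measure_le_enorm_ne_zero_of_lt_eLpNormEssSup ht).bot_lt one_pos).ne'
  have hc : c ≠ ∞ := ne_top_of_le_ne_top ENNReal.one_ne_top (min_le_right _ _)
  have hlim : Tendsto (fun q : ℝ => t * c ^ (1 / q)) atTop (𝓝 t) := by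
    have hpow : Tendsto (fun q : ℝ => c ^ (1 / q)) atTop (𝓝 (c ^ (0 : ℝ))) :=
      (continuous_const_ennrpow hc₀ hc).tendsto 0 |>.comp (tendsto_const_nhds.div_atTop tendsto_id)
    rw [ENNReal.rpow_zero] at hpow
    simpa only [mul_one] using ENNReal.Tendsto.const_mul hpow (Or.inl one_ne_zero)
  rw [← hlim.liminf_eq]
  refine liminf_le_liminf ?_
  filter_upwards [eventually_gt_atTop 0] with q hq
  calc t * c ^ (1 / q) ≤ t * μ {x | t ≤ ‖f x‖ₑ} ^ (1 / q) := by
        gcongr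
        exact min_le_left _ _
    _ ≤ eLpNorm' f q μ := mul_measure_le_enorm_rpow_le_eLpNorm' hf hq t

theorem eLpNormEssSup_le_of_tendsto {ι : Type*} {l : Filter ι} [l.NeBot] {q : ι → ℝ}
    {B : ι → ℝ≥0∞} {b : ℝ≥0∞} (hf : AEStronglyMeasurable f μ) (hq : Tendsto q l atTop)
    (hB : Tendsto B l (𝓝 b)) (hle : ∀ i, eLpNorm' f (q i) μ ≤ B i) : eLpNormEssSup f μ ≤ b :=
  calc eLpNormEssSup f μ ≤ liminf (fun r : ℝ => eLpNorm' f r μ) atTop :=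
        eLpNormEssSup_le_liminf_eLpNorm' hf
    _ ≤ liminf (fun i => eLpNorm' f (q i) μ) l := liminf_le_liminf_of_le hq
    _ ≤ liminf B l := liminf_le_liminf (Eventually.of_forall hle)
    _ = b := hB.liminf_eq

end EssSup

theorem le_prod_range_mul_of_succ_le_mul {M : Type*} [CommMonoid M] [Preorder M] [MulLeftMono M]
    {u A : ℕ → M} (h : ∀ n, u (n + 1) ≤ A n * u n) (n : ℕ) :
    u n ≤ (∏ i ∈ Finset.range n, A i) * u 0 := by
  induction n with
  | zero => simp
  | succ n ih =>
    calc u (n + 1) ≤ A n * u n := h n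
      _ ≤ A n * ((∏ i ∈ Finset.range n, A i) * u 0) := by gcongr
      _ = (∏ i ∈ Finset.range (n + 1), A i) * u 0 := by
        rw [Finset.prod_range_succ_comm, mul_assoc]

section MoserConst

/-- The factor `(C λⁿ p)^{1/(λⁿ p)}` lost in the `n`-th step of the Moser iteration, which passes
from the exponent `λⁿ p` to `λⁿ⁺¹ p`. -/
noncomputable def moserFactor (lam p C : ℝ) (n : ℕ) : ℝ :=
  (C * (lam ^ n * p)) ^ (1 / (lam ^ n * p))

/-- The constant `∏ₙ (C λⁿ p)^{1/(λⁿ p)}` accumulated by the whole Moser iteration. The infinite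
product converges for `λ > 1` and `p, C > 0`, see `multipliable_moserFactor`. -/
noncomputable def moserConst (lam p C : ℝ) : ℝ :=
  ∏' n, moserFactor lam p C n

variable {lam p C : ℝ}

theorem moserFactor_pos (hlam : 0 < lam) (hp : 0 < p) (hC : 0 < C) (n : ℕ) :
    0 < moserFactor lam p C n :=
  Real.rpow_pos_of_pos (by positivity) _

theorem one_le_moserFactor (hlam : 1 ≤ lam) (hp : 1 ≤ p) (hC : 1 ≤ C) (n : ℕ) :
    1 ≤ moserFactor lam p C n :=
  Real.one_le_rpow (one_le_mul_of_one_le_of_one_le hC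
    (one_le_mul_of_one_le_of_one_le (one_le_pow₀ hlam) hp)) (by positivity)

theorem log_moserFactor (hlam : 0 < lam) (hp : 0 < p) (hC : 0 < C) (n : ℕ) :
    Real.log (moserFactor lam p C n) =
      Real.log (C * p) / p * lam⁻¹ ^ n + Real.log lam / p * (n * lam⁻¹ ^ n) := by
  rw [moserFactor, Real.log_rpow (by positivity), mul_left_comm, mul_comm (lam ^ n),
    Real.log_mul (by positivity) (by positivity), Real.log_pow, inv_pow]
  ring

theorem summable_log_moserFactor (hlam : 1 < lam) (hp : 0 < p) (hC : 0 < C) :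
    Summable fun n => Real.log (moserFactor lam p C n) := by
  have hlam₀ : 0 < lam := one_pos.trans hlam
  have hlam_inv : ‖lam⁻¹‖ < 1 := by
    rw [Real.norm_of_nonneg (inv_nonneg.mpr hlam₀.le)]
    exact inv_lt_one_of_one_lt₀ hlam
  have hgeom : Summable fun n : ℕ => lam⁻¹ ^ n := summable_geometric_of_norm_lt_one hlam_inv
  have harith_geom : Summable fun n : ℕ => n * lam⁻¹ ^ n := by
    simpa only [pow_one] using summable_pow_mul_geometric_of_norm_lt_one 1 hlam_inv
  simp_rw [log_moserFactor hlam₀ hp hC]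
  exact (hgeom.mul_left _).add (harith_geom.mul_left _)

theorem multipliable_moserFactor (hlam : 1 < lam) (hp : 0 < p) (hC : 0 < C) :
    Multipliable (moserFactor lam p C) :=
  Real.multipliable_of_summable_log (moserFactor_pos (one_pos.trans hlam) hp hC)
    (summable_log_moserFactor hlam hp hC)

theorem exp_tsum_log_moserFactor (hlam : 1 < lam) (hp : 0 < p) (hC : 0 < C) :
    Real.exp (∑' n, Real.log (moserFactor lam p C n)) = moserConst lam p C :=
  Real.rexp_tsum_eq_tprod (moserFactor_pos (one_pos.trans hlam) hp hC)
    (summable_log_moserFactor hlam hp hC)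

theorem moserConst_pos (hlam : 1 < lam) (hp : 0 < p) (hC : 0 < C) : 0 < moserConst lam p C :=
  exp_tsum_log_moserFactor hlam hp hC ▸ Real.exp_pos _

theorem one_le_moserConst (hlam : 1 < lam) (hp : 1 ≤ p) (hC : 1 ≤ C) : 1 ≤ moserConst lam p C := by
  rw [← exp_tsum_log_moserFactor hlam (one_pos.trans_le hp) (one_pos.trans_le hC)]
  exact Real.one_le_exp <|
    tsum_nonneg fun n => Real.log_nonneg (one_le_moserFactor hlam.le hp hC n)

theorem tendsto_prod_ofReal_moserFactor (hlam : 1 < lam) (hp : 0 < p) (hC : 0 < C) :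
    Tendsto (fun n => ∏ i ∈ Finset.range n, ENNReal.ofReal (moserFactor lam p C i)) atTop
      (𝓝 (ENNReal.ofReal (moserConst lam p C))) := by
  have hpos := moserFactor_pos (one_pos.trans hlam) hp hC
  simp_rw [← ENNReal.ofReal_prod_of_nonneg fun i _ => (hpos i).le]
  exact ENNReal.tendsto_ofReal (multipliable_moserFactor hlam hp hC).hasProd.tendsto_prod_nat

end MoserConst

theorem moser_iteration_general {X ε : Type*} [MeasurableSpace X] {μ : Measure X}
    [TopologicalSpace ε] [ContinuousENorm ε] {f : X → ε} {lam p₀ C : ℝ}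
    (hlam : 1 < lam) (hp₀ : 0 < p₀) (hC : 0 < C) (hf : AEStronglyMeasurable f μ)
    (hrev : ∀ n : ℕ, eLpNorm' f (lam * (lam ^ n * p₀)) μ ≤
      ENNReal.ofReal (C * (lam ^ n * p₀)) ^ (1 / (lam ^ n * p₀)) *
        eLpNorm' f (lam ^ n * p₀) μ) :
    eLpNormEssSup f μ ≤ ENNReal.ofReal (moserConst lam p₀ C) * eLpNorm' f p₀ μ := by
  have hexp : Tendsto (fun n : ℕ => lam ^ n * p₀) atTop atTop :=
    (tendsto_pow_atTop_atTop_of_one_lt hlam).atTop_mul_const hp₀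
  have hstep (n : ℕ) : eLpNorm' f (lam ^ (n + 1) * p₀) μ ≤
      ENNReal.ofReal (moserFactor lam p₀ C n) * eLpNorm' f (lam ^ n * p₀) μ := by
    rw [moserFactor, ← ENNReal.ofReal_rpow_of_pos (by positivity), pow_succ', mul_assoc]
    exact hrev n
  have hiter (n : ℕ) : eLpNorm' f (lam ^ n * p₀) μ ≤
      (∏ i ∈ Finset.range n, ENNReal.ofReal (moserFactor lam p₀ C i)) * eLpNorm' f p₀ μ := by
    simpa only [pow_zero, one_mul] using
      le_prod_range_mul_of_succ_le_mul (u := fun k => eLpNorm' f (lam ^ k * p₀) μ) hstep n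
  refine eLpNormEssSup_le_of_tendsto hf hexp ?_ hiter
  exact ENNReal.Tendsto.mul_const (tendsto_prod_ofReal_moserFactor hlam hp₀ hC)
    (Or.inl (ENNReal.ofReal_pos.mpr (moserConst_pos hlam hp₀ hC)).ne')

/-- Moser iteration: a reverse Hölder inequality
`‖f‖_{λp} ≤ (Cp)^{1/p} ‖f‖_p` for all `p ≥ p₀` over a probability measure implies
`essSup f ≤ C₀ ‖f‖_{p₀}`, with `C₀` depending only on `λ`, `p₀`, `C`. -/
theorem moser_iteration (lam p₀ C : ℝ) (hlam : 1 < lam) (hp₀ : 1 ≤ p₀) (hC : 1 ≤ C) :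
    ∃ C₀ : ℝ, 1 ≤ C₀ ∧
      ∀ (X : Type) (_ : MeasurableSpace X) (μ : Measure X), IsProbabilityMeasure μ →
        ∀ f : X → ℝ, Measurable f → (∀ x, 0 ≤ f x) →
          (∀ p : ℝ, p₀ ≤ p →
            (∫⁻ x, ENNReal.ofReal (f x) ^ (lam * p) ∂μ) ^ (1 / (lam * p)) ≤
              ENNReal.ofReal (C * p) ^ (1 / p) *
                (∫⁻ x, ENNReal.ofReal (f x) ^ p ∂μ) ^ (1 / p)) →
          essSup (fun x => ENNReal.ofReal (f x)) μ ≤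
            ENNReal.ofReal C₀ * (∫⁻ x, ENNReal.ofReal (f x) ^ p₀ ∂μ) ^ (1 / p₀) :=
  ⟨moserConst lam p₀ C, one_le_moserConst hlam hp₀ hC, fun _ _ _ _ _ hf _ hrev =>
    moser_iteration_general (ε := ℝ≥0∞) hlam (one_pos.trans_le hp₀) (one_pos.trans_le hC)
      hf.ennreal_ofReal.aestronglyMeasurable fun n =>
        hrev (lam ^ n * p₀) (le_mul_of_one_le_left (by positivity) (one_le_pow₀ hlam.le))⟩
end

section
/- Let n ≥ 1 and let G : Fin n → Fin n → ℂ, D : Fin n → Fin n → Fin n → ℂ, M : Fin n → Fin n → Fin n → ℂ, and B : Fin n → Fin n → Fin n → ℂ, where B is symmetric in its last two arguments (B a b c = B a c b for all a, b, c). Then for all i, j ∈ Fin n, the sum over p, q, l, m ∈ Fin n of G q p · G m l multiplied by [ D i m p · M j l q − D i m p · M l j q + D j m p · M l i q − D j m p · M i l q − D p m i · M j l q + D p m i · B q l j − D j q l · M p i m + D j q l · B m p i + D p m j · M i l q − D p m j · B q i l + D i q l · M p j m − D i q l · B m p j − D i q l · M j p m + D l q i · M j p m + D i q l · B m j p − D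 l q i · B m j p − D l q j · M i p m + D j q l · M i p m + D l q j · B m i p − D j q l · B m i p ] equals 0. -/
/-!
By the symmetry of `B`, the terms `A₈, A₂₀` and `A₁₂, A₁₅` cancel pointwise and the other sixteen
pair up under the exchange of `(p, q)` with `(l, m)`: they have the form `X p q l m - X l m p q`.
The weight `g^{q̄ p} g^{m̄ l}` is invariant under this exchange, so the weighted sum vanishes.
-/

section SwapSums

variable {κ ι ι' A : Type*} [Fintype κ] [Fintype ι] [Fintype ι'] [AddCommGroup A]

theorem sum_sum_sub_swap_eq_zero (f : κ → κ → A) : ∑ a, ∑ b, (f a b - f b a) = 0 := by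
  simp only [Finset.sum_sub_distrib]
  exact sub_eq_zero.mpr Finset.sum_comm

theorem sum_sum_sum_sum_sub_swap_pairs_eq_zero (f : ι → ι' → ι → ι' → A) :
    ∑ p, ∑ q, ∑ l, ∑ m, (f p q l m - f l m p q) = 0 := by
  simpa only [Fintype.sum_prod_type] using
    sum_sum_sub_swap_eq_zero fun a b : ι × ι' => f a.1 a.2 b.1 b.2

end SwapSums

section TorsionPotential

variable {ι R : Type*} [CommRing R]

/-- The contribution
`g_{i m̄, p} (α_{j, l q̄} - α_{l, j q̄}) - g_{p m̄, i} (α_{j, l q̄} - α_{q̄, l j})` to the integrand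
of `∂g ⋆ ∂²α`. The sixteen terms that do not cancel pointwise are its antisymmetrization in
`(i, j)` and under the exchange of `(p, q)` with `(l, m)`. Here `D a b c` is `g_{a b̄, c}`,
`M a b c` is `α_{a, b c̄}` and `B a b c` is `α_{ā, b c}`. -/
def firstOrderTerm (D M B : ι → ι → ι → R) (i j p q l m : ι) : R :=
  D i m p * (M j l q - M l j q) - D p m i * (M j l q - B q l j)

theorem twenty_terms_eq_firstOrderTerm_antisymm (D M B : ι → ι → ι → R)
    (hB : ∀ a b c, B a b c = B a c b) (i j p q l m : ι) :
    D i m p * M j l q - D i m p * M l j q + D j m p * M l i q - D j m p * M i l q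
        - D p m i * M j l q + D p m i * B q l j - D j q l * M p i m + D j q l * B m p i
        + D p m j * M i l q - D p m j * B q i l + D i q l * M p j m - D i q l * B m p j
        - D i q l * M j p m + D l q i * M j p m + D i q l * B m j p - D l q i * B m j p
        - D l q j * M i p m + D j q l * M i p m + D l q j * B m i p - D j q l * B m i p
      = (firstOrderTerm D M B i j p q l m - firstOrderTerm D M B j i p q l m)
        - (firstOrderTerm D M B i j l m p q - firstOrderTerm D M B j i l m p q) := by
  unfold firstOrderTerm
  rw [hB q i l, hB m p i, hB m p j]
  ring

theorem torsion_potential_cancellation_general [Fintype ι]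
    (G : ι → ι → R) (D M B : ι → ι → ι → R) (hB : ∀ a b c, B a b c = B a c b) (i j : ι) :
    ∑ p, ∑ q, ∑ l, ∑ m, G q p * G m l *
      (D i m p * M j l q - D i m p * M l j q + D j m p * M l i q - D j m p * M i l q
        - D p m i * M j l q + D p m i * B q l j - D j q l * M p i m + D j q l * B m p i
        + D p m j * M i l q - D p m j * B q i l + D i q l * M p j m - D i q l * B m p j
        - D i q l * M j p m + D l q i * M j p m + D i q l * B m j p - D l q i * B m j p
        - D l q j * M i p m + D j q l * M i p m + D l q j * B m i p - D j q l * B m i p)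
      = 0 := by
  let X (p q l m : ι) : R := firstOrderTerm D M B i j p q l m - firstOrderTerm D M B j i p q l m
  have weight_swap (p q l m : ι) : G q p * G m l * (X p q l m - X l m p q)
      = G q p * G m l * X p q l m - G m l * G q p * X l m p q := by ring
  simp only [twenty_terms_eq_firstOrderTerm_antisymm D M B hB]
  calc ∑ p, ∑ q, ∑ l, ∑ m, G q p * G m l * (X p q l m - X l m p q)
      = ∑ p, ∑ q, ∑ l, ∑ m, (G q p * G m l * X p q l m - G m l * G q p * X l m p q) := by
        simp only [weight_swap]
    _ = 0 := sum_sum_sum_sum_sub_swap_pairs_eq_zero fun p q l m => G q p * G m l * X p q l m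

end TorsionPotential

/-- The key cancellation `∂g ⋆ ∂²α = ∑_{i=1}^{20} A_i = 0` in the evolution of the
torsion potential along pluriclosed flow: the twenty first-order terms cancel in
pairs after relabeling summation indices, using only the symmetry of `B` in its
last two arguments. -/
theorem torsion_potential_cancellation (n : ℕ) (hn : 1 ≤ n)
    (G : Fin n → Fin n → ℂ) (D M B : Fin n → Fin n → Fin n → ℂ)
    (hB : ∀ a b c, B a b c = B a c b) (i j : Fin n) :
    ∑ p, ∑ q, ∑ l, ∑ m, G q p * G m l *
      (D i m p * M j l q - D i m p * M l j q + D j m p * M l i q - D j m p * M i l q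
        - D p m i * M j l q + D p m i * B q l j - D j q l * M p i m + D j q l * B m p i
        + D p m j * M i l q - D p m j * B q i l + D i q l * M p j m - D i q l * B m p j
        - D i q l * M j p m + D l q i * M j p m + D i q l * B m j p - D l q i * B m j p
        - D l q j * M i p m + D j q l * M i p m + D l q j * B m i p - D j q l * B m i p)
      = 0 :=
  torsion_potential_cancellation_general G D M B hB i j
end
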